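/- Let t₁, t₂ ≥ 0 with t₁ + t₂ = 1. The measure η_{t₁,t₂} on Gr(V) is quasi-invariant under the action of GLB, with cocycle given explicitly as follows: for every g ∈ GLB and every measurable set A ⊆ Gr(V), η_{t₁,t₂}(g·A) = ∫_A q^{Σ_k k·(Sym(X)_k − Sym(gX)_k)} η_{t₁,t₂}(dX), where for each X and g the sum Σ_k k·(Sym(X)_k − Sym(gX)_k) has only finitely many nonzero terms. (Proposition 5.7: fundamental cocycle of the GLB-action on the grassmannian.) -/

import Mathlib

open MeasureTheory

variable (F : Type) [Field F] [Fintype F] [DecidableEq F]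

/-- `V = ⊕_{i≥0} F`: the `F`-vector space of finitely supported sequences. -/
abbrev Vinf := ℕ →₀ F

/-- `V_n`: the span of the first `n` standard basis vectors of `V`. -/
def Vn (n : ℕ) : Submodule F (Vinf F) where
  carrier := {v | ∀ i : ℕ, n ≤ i → v i = 0}
  add_mem' := by
    intro a b ha hb i hi
    simp [Finsupp.add_apply, ha i hi, hb i hi]
  zero_mem' := by
    intro i hi
    simp
  smul_mem' := by
    intro c v hv i hi
    simp [Finsupp.smul_apply, hv i hi]

/-- The group `GLB` of `F`-linear automorphisms `g` of `V` with `g(V_n) = V_n` for all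
sufficiently large `n`. -/
def GLBgrp : Subgroup ((Vinf F) ≃ₗ[F] (Vinf F)) where
  carrier := {g | ∃ N : ℕ, ∀ n : ℕ, N ≤ n →
    Submodule.map (g : (Vinf F) →ₗ[F] (Vinf F)) (Vn F n) = Vn F n}
  one_mem' := by
    refine ⟨0, fun n _ => ?_⟩
    have h1 : ((1 : (Vinf F) ≃ₗ[F] (Vinf F)) : (Vinf F) →ₗ[F] (Vinf F)) = LinearMap.id := by
      ext x; rfl
    rw [h1, Submodule.map_id]
  mul_mem' := by
    rintro g h ⟨Ng, hg⟩ ⟨Nh, hh⟩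
    refine ⟨max Ng Nh, fun n hn => ?_⟩
    have h1 : ((g * h : (Vinf F) ≃ₗ[F] (Vinf F)) : (Vinf F) →ₗ[F] (Vinf F))
        = ((g : (Vinf F) →ₗ[F] (Vinf F)).comp (h : (Vinf F) →ₗ[F] (Vinf F))) := by
      ext x; rfl
    rw [h1, Submodule.map_comp, hh n (le_trans (le_max_right _ _) hn),
      hg n (le_trans (le_max_left _ _) hn)]
  inv_mem' := by
    rintro g ⟨N, hg⟩
    refine ⟨N, fun n hn => ?_⟩
    conv_lhs => rw [← hg n hn]
    rw [← Submodule.map_comp]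
    have h1 : ((g⁻¹ : (Vinf F) ≃ₗ[F] (Vinf F)) : (Vinf F) →ₗ[F] (Vinf F)).comp
        ((g : (Vinf F) →ₗ[F] (Vinf F))) = LinearMap.id := by
      have h0 : ((g⁻¹ * g : (Vinf F) ≃ₗ[F] (Vinf F)) : (Vinf F) →ₗ[F] (Vinf F))
          = ((g⁻¹ : (Vinf F) ≃ₗ[F] (Vinf F)) : (Vinf F) →ₗ[F] (Vinf F)).comp
            ((g : (Vinf F) →ₗ[F] (Vinf F))) := by
        ext x; rfl
      rw [← h0, inv_mul_cancel]
      ext x; rfl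
    rw [h1, Submodule.map_id]

/-- The Borel subgroup `B ⊆ GLB` of automorphisms with `g(V_n) = V_n` for all `n`. -/
def Bgrp : Subgroup ((Vinf F) ≃ₗ[F] (Vinf F)) where
  carrier := {g | ∀ n : ℕ,
    Submodule.map (g : (Vinf F) →ₗ[F] (Vinf F)) (Vn F n) = Vn F n}
  one_mem' := by
    intro n
    have h1 : ((1 : (Vinf F) ≃ₗ[F] (Vinf F)) : (Vinf F) →ₗ[F] (Vinf F)) = LinearMap.id := by
      ext x; rfl
    rw [h1, Submodule.map_id]
  mul_mem' := by
    intro g h hg hh n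
    have h1 : ((g * h : (Vinf F) ≃ₗ[F] (Vinf F)) : (Vinf F) →ₗ[F] (Vinf F))
        = ((g : (Vinf F) →ₗ[F] (Vinf F)).comp (h : (Vinf F) →ₗ[F] (Vinf F))) := by
      ext x; rfl
    rw [h1, Submodule.map_comp, hh n, hg n]
  inv_mem' := by
    intro g hg n
    conv_lhs => rw [← hg n]
    rw [← Submodule.map_comp]
    have h1 : ((g⁻¹ : (Vinf F) ≃ₗ[F] (Vinf F)) : (Vinf F) →ₗ[F] (Vinf F)).comp
        ((g : (Vinf F) →ₗ[F] (Vinf F))) = LinearMap.id := by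
      have h0 : ((g⁻¹ * g : (Vinf F) ≃ₗ[F] (Vinf F)) : (Vinf F) →ₗ[F] (Vinf F))
          = ((g⁻¹ : (Vinf F) ≃ₗ[F] (Vinf F)) : (Vinf F) →ₗ[F] (Vinf F)).comp
            ((g : (Vinf F) →ₗ[F] (Vinf F))) := by
        ext x; rfl
      rw [← h0, inv_mul_cancel]
      ext x; rfl
    rw [h1, Submodule.map_id]

/-- The Borel σ-algebra of `B` for the topology of pointwise convergence: the σ-algebra
generated by the evaluations `g ↦ g(e_i)` (with the finite set `V` discrete). -/
noncomputable instance mB : MeasurableSpace ↥(Bgrp F) := by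
  letI : MeasurableSpace (Vinf F) := ⊤
  exact MeasurableSpace.comap
    (fun g => fun i : ℕ => ((g : (Vinf F) ≃ₗ[F] (Vinf F)) (Finsupp.single i 1)))
    MeasurableSpace.pi

/-- The increment `Sym(X)_{k+1} = dim(X ∩ V_{k+1}) - dim(X ∩ V_k)` of the symbol of a
subspace `X ⊆ V` (0-based indexing: `symInc X k` is the `(k+1)`-st, 1-based, entry). -/
noncomputable def symInc (X : Submodule F (Vinf F)) (k : ℕ) : ℕ :=
  Module.finrank F ↥(X ⊓ Vn F (k + 1)) - Module.finrank F ↥(X ⊓ Vn F k)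

/-- The coordinate subspace `C(x) = span{e_i : x_i = 1}` of a 0–1 sequence `x`. -/
noncomputable def coordSpan (x : ℕ → Bool) : Submodule F (Vinf F) :=
  Submodule.span F ((fun i : ℕ => Finsupp.single i (1 : F)) '' {i : ℕ | x i = true})

/-- The map `φ : {0,1}^ℕ × B → Gr(V)`, `(x, g) ↦ g·C(x)`. -/
noncomputable def phiMap (p : (ℕ → Bool) × ↥(Bgrp F)) : Submodule F (Vinf F) :=
  Submodule.map ((p.2 : (Vinf F) ≃ₗ[F] (Vinf F)) : (Vinf F) →ₗ[F] (Vinf F)) (coordSpan F p.1)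

/-- The cylinder σ-algebra of the grassmannian `Gr(V)`, generated by the sets
`{X : X ∩ V_n = Y}`. -/
noncomputable instance mGr : MeasurableSpace (Submodule F (Vinf F)) :=
  MeasurableSpace.generateFrom
    {A | ∃ (n : ℕ) (Y : Submodule F (Vinf F)), A = {X | X ⊓ Vn F n = Y}}

/-!
Write `E(Y) = ∑ k * Sym(Y)_k`. Row reduction by transvections shows that the `B`-orbits on the
subspaces of `V_n` are the Schubert cells, consisting of the subspaces with a given symbol. So for a
fixed word `x` and a Haar random `b`, the subspace `b • C(x) ⊓ V_n` is uniformly distributed over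
the cell with symbol `x`, and adding the pivots one at a time shows that a cell of subspaces `Y` of
dimension `d` has `q ^ (E(Y) - d (d + 1) / 2)` elements. The law of the word enters only through the
probability of the first `n` letters of `Sym(Y)`; as the law is exchangeable, this depends only on
`n` and `d`. Hence the level-`n` cylinder over `Y` has mass `q ^ (-E(Y))` times a function of `n`
and `d`. An element `g` of `GLB` permutes the cylinders of each large level and preserves `d`, so it
multiplies these masses by `q ^ (E(Y) - E(gY))`, and such cylinders form a generating π-system.
-/

open scoped Pointwise

section Flag

variable {K : Type} [Field K] {m n k : ℕ} {X Y : Submodule K (Vinf K)} {v : Vinf K}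

theorem mem_Vn : v ∈ Vn K n ↔ ∀ i, n ≤ i → v i = 0 := Iff.rfl

theorem apply_eq_zero_of_mem_Vn (hv : v ∈ Vn K n) (h : n ≤ k) : v k = 0 := hv k h

theorem Vn_mono : Monotone (Vn K) := fun _ _ h _ hv i hi => hv i (h.trans hi)

theorem inf_Vn_inf_Vn (h : m ≤ n) (X : Submodule K (Vinf K)) :
    X ⊓ Vn K n ⊓ Vn K m = X ⊓ Vn K m := by
  rw [inf_assoc, inf_eq_right.2 (Vn_mono h)]

theorem mem_Vn_of_mem_Vn_succ (hv : v ∈ Vn K (n + 1)) (hn : v n = 0) : v ∈ Vn K n :=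
  fun i hi => hi.eq_or_lt.elim (fun h => h ▸ hn) (hv i)

theorem Vn_eq_supported (n : ℕ) : Vn K n = Finsupp.supported K K (Set.Iio n) := by
  ext v
  simp [Finsupp.mem_supported', mem_Vn]

theorem Vn_zero : Vn K 0 = ⊥ := by
  simp [Vn_eq_supported, Finsupp.supported_empty]

instance finiteDimensional_Vn (n : ℕ) : FiniteDimensional K (Vn K n) := by
  rw [Vn_eq_supported]
  exact Module.Finite.equiv (Finsupp.supportedEquivFinsupp (R := K) (M := K) (Set.Iio n)).symm

theorem finrank_Vn (n : ℕ) : Module.finrank K (Vn K n) = n := by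
  rw [Vn_eq_supported, (Finsupp.supportedEquivFinsupp (Set.Iio n)).finrank_eq]
  simp

theorem finite_setOf_le_Vn [Finite K] (n : ℕ) : {Y : Submodule K (Vinf K) | Y ≤ Vn K n}.Finite := by
  have hVn : (Vn K n : Set (Vinf K)).Finite :=
    Set.finite_coe_iff.1 (Module.finite_of_finite K : Finite (Vn K n))
  exact Set.Finite.of_finite_image
    (hVn.finite_subsets.subset (by rintro _ ⟨Y, hY, rfl⟩; exact hY)) SetLike.coe_injective.injOn

/-- The pivot vectors of `X` at position `n`: the members of `X` of degree `n` with leading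
coefficient `1`. They exist exactly when `n` is a jump of `dim (X ⊓ V_n)`. -/
def pivotVectors (X : Submodule K (Vinf K)) (n : ℕ) : Set (Vinf K) :=
  {v | v ∈ X ∧ v ∈ Vn K (n + 1) ∧ v n = 1}

theorem sub_mem_inf_Vn_of_mem_pivotVectors {u v : Vinf K} (hu : u ∈ pivotVectors X n)
    (hv : v ∈ pivotVectors X n) : u - v ∈ X ⊓ Vn K n :=
  ⟨X.sub_mem hu.1 hv.1,
    mem_Vn_of_mem_Vn_succ (Submodule.sub_mem _ hu.2.1 hv.2.1) (by simp [hu.2.2, hv.2.2])⟩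

theorem add_mem_pivotVectors {u v : Vinf K} (hu : u ∈ X ⊓ Vn K n) (hv : v ∈ pivotVectors X n) :
    u + v ∈ pivotVectors X n :=
  ⟨X.add_mem hu.1 hv.1, Submodule.add_mem _ (Vn_mono n.le_succ hu.2) hv.2.1, by
    simp [apply_eq_zero_of_mem_Vn hu.2 le_rfl, hv.2.2]⟩

theorem finite_pivotVectors [Finite K] (X : Submodule K (Vinf K)) (n : ℕ) :
    Finite (pivotVectors X n) :=
  Set.Finite.subset (Set.finite_coe_iff.1 (Module.finite_of_finite K : Finite (Vn K (n + 1))))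
    fun _ hv => hv.2.1

/-- Pivot vectors form a torsor under `X ⊓ Vn K n`. -/
theorem natCard_pivotVectors (h : (pivotVectors X n).Nonempty) :
    Nat.card (pivotVectors X n) = Nat.card ↥(X ⊓ Vn K n) := by
  obtain ⟨v, hv⟩ := h
  exact Nat.card_congr
    { toFun := fun u => ⟨u - v, sub_mem_inf_Vn_of_mem_pivotVectors u.2 hv⟩
      invFun := fun u => ⟨u + v, add_mem_pivotVectors u.2 hv⟩
      left_inv := fun u => by simp
      right_inv := fun u => by simp }

theorem inf_Vn_succ_eq_sup_span (hv : v ∈ pivotVectors X n) :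
    X ⊓ Vn K (n + 1) = X ⊓ Vn K n ⊔ K ∙ v := by
  apply le_antisymm
  · rintro x ⟨hxX, hx⟩
    have hmem : x - x n • v ∈ X ⊓ Vn K n :=
      ⟨X.sub_mem hxX (X.smul_mem _ hv.1), mem_Vn_of_mem_Vn_succ
        (Submodule.sub_mem _ hx (Submodule.smul_mem _ _ hv.2.1)) (by simp [hv.2.2])⟩
    rw [← sub_add_cancel x (x n • v)]
    exact Submodule.add_mem_sup hmem
      (Submodule.smul_mem _ _ (Submodule.mem_span_singleton_self v))
  · exact sup_le (inf_le_inf_left _ (Vn_mono n.le_succ))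
      ((Submodule.span_singleton_le_iff_mem _ _).2 ⟨hv.1, hv.2.1⟩)

theorem inf_Vn_succ_eq_inf_Vn (h : ¬ (pivotVectors X n).Nonempty) :
    X ⊓ Vn K (n + 1) = X ⊓ Vn K n := by
  refine le_antisymm (fun x hx => ⟨hx.1, mem_Vn_of_mem_Vn_succ hx.2 ?_⟩)
    (inf_le_inf_left _ (Vn_mono n.le_succ))
  by_contra hxn
  exact h ⟨(x n)⁻¹ • x, X.smul_mem _ hx.1, Submodule.smul_mem _ _ hx.2, by simp [hxn]⟩

theorem disjoint_Vn_span_pivotVector (hv : v ∈ pivotVectors X n) : Disjoint (Vn K n) (K ∙ v) := by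
  refine (Submodule.disjoint_span_singleton' fun h => ?_).2 fun hmem => ?_
  · simpa [h] using hv.2.2
  · simpa [hv.2.2] using apply_eq_zero_of_mem_Vn hmem le_rfl

theorem finrank_inf_Vn_succ (h : (pivotVectors X n).Nonempty) :
    Module.finrank K ↥(X ⊓ Vn K (n + 1)) = Module.finrank K ↥(X ⊓ Vn K n) + 1 := by
  obtain ⟨v, hv⟩ := h
  have hv0 : v ≠ 0 := fun h => by simpa [h] using hv.2.2
  have hdisj := (disjoint_Vn_span_pivotVector hv).mono_left (inf_le_right : X ⊓ Vn K n ≤ _)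
  have hdim := Submodule.finrank_sup_add_finrank_inf_eq (X ⊓ Vn K n) (K ∙ v)
  rwa [← inf_Vn_succ_eq_sup_span hv, hdisj.eq_bot, finrank_bot, add_zero,
    finrank_span_singleton hv0] at hdim

theorem sup_span_inf_Vn (hY : Y ≤ Vn K n) (hv : v ∈ pivotVectors X n) :
    (Y ⊔ K ∙ v) ⊓ Vn K n = Y := by
  rw [sup_inf_assoc_of_le _ hY, inf_comm, (disjoint_Vn_span_pivotVector hv).eq_bot, sup_bot_eq]

end Flag

section Symbol

variable {K : Type} [Field K] {n k : ℕ} {X : Submodule K (Vinf K)} {x y : ℕ → Bool}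

/-- The symbol of `X` as a Boolean sequence, so that it can be compared with the argument of
`coordSpan`. -/
noncomputable def symbol (X : Submodule K (Vinf K)) (k : ℕ) : Bool := decide (symInc K X k = 1)

theorem symInc_of_nonempty (h : (pivotVectors X k).Nonempty) : symInc K X k = 1 := by
  rw [symInc, finrank_inf_Vn_succ h, Nat.add_sub_cancel_left]

theorem symInc_of_not_nonempty (h : ¬ (pivotVectors X k).Nonempty) : symInc K X k = 0 := by
  rw [symInc, inf_Vn_succ_eq_inf_Vn h, Nat.sub_self]

theorem symbol_eq_true_iff : symbol X k = true ↔ (pivotVectors X k).Nonempty := by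
  by_cases h : (pivotVectors X k).Nonempty
  · simp [symbol, symInc_of_nonempty h, h]
  · simp [symbol, symInc_of_not_nonempty h, h]

theorem symInc_eq_toNat_symbol (X : Submodule K (Vinf K)) (k : ℕ) :
    symInc K X k = (symbol X k).toNat := by
  by_cases h : (pivotVectors X k).Nonempty
  · simp [symbol, symInc_of_nonempty h]
  · simp [symbol, symInc_of_not_nonempty h]

theorem finrank_inf_Vn (X : Submodule K (Vinf K)) (n : ℕ) :
    Module.finrank K ↥(X ⊓ Vn K n) = ∑ k ∈ Finset.range n, symInc K X k := by
  have hmono : Monotone fun n => Module.finrank K ↥(X ⊓ Vn K n) := fun _ _ h =>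
    Submodule.finrank_mono (inf_le_inf_left _ (Vn_mono h))
  have hzero : Module.finrank K ↥(X ⊓ Vn K 0) = 0 := by rw [Vn_zero, inf_bot_eq, finrank_bot]
  simp only [symInc, Finset.sum_range_tsub hmono, hzero, tsub_zero]

theorem symInc_inf_Vn (h : k < n) (X : Submodule K (Vinf K)) :
    symInc K (X ⊓ Vn K n) k = symInc K X k := by
  rw [symInc, symInc, inf_Vn_inf_Vn h, inf_Vn_inf_Vn h.le]

theorem symbol_inf_Vn (h : k < n) (X : Submodule K (Vinf K)) :
    symbol (X ⊓ Vn K n) k = symbol X k := by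
  rw [symbol, symbol, symInc_inf_Vn h]

variable {g : Vinf K ≃ₗ[K] Vinf K}

theorem smul_inf_Vn (hg : g • Vn K n = Vn K n) (X : Submodule K (Vinf K)) :
    (g • X) ⊓ Vn K n = g • (X ⊓ Vn K n) := by
  conv_lhs => rw [← hg]
  exact (Submodule.map_inf _ (g.injective)).symm

theorem smul_le_Vn_iff (hg : g • Vn K n = Vn K n) : g • X ≤ Vn K n ↔ X ≤ Vn K n := by
  conv_lhs => rw [← hg]
  exact Submodule.map_le_map_iff_of_injective (g.injective) _ _

theorem finrank_smul_submodule (g : Vinf K ≃ₗ[K] Vinf K) (X : Submodule K (Vinf K)) :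
    Module.finrank K ↥(g • X) = Module.finrank K X :=
  g.finrank_map_eq X

theorem symInc_smul (hg : g • Vn K k = Vn K k) (hg' : g • Vn K (k + 1) = Vn K (k + 1))
    (X : Submodule K (Vinf K)) : symInc K (g • X) k = symInc K X k := by
  rw [symInc, symInc, smul_inf_Vn hg, smul_inf_Vn hg', finrank_smul_submodule,
    finrank_smul_submodule]

theorem smul_Vn (b : Bgrp K) (n : ℕ) : b • Vn K n = Vn K n := b.2 n

theorem symbol_smul (b : Bgrp K) (X : Submodule K (Vinf K)) : symbol (b • X) = symbol X := by
  funext k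
  rw [symbol, symbol, Subgroup.smul_def, symInc_smul (smul_Vn b k) (smul_Vn b (k + 1))]

theorem mem_coordSpan {v : Vinf K} : v ∈ coordSpan K x ↔ ∀ i, x i = false → v i = 0 := by
  rw [coordSpan, ← Finsupp.supported_eq_span_single, Finsupp.mem_supported']
  simp

theorem coordSpan_inf_Vn_congr (h : ∀ k < n, x k = y k) :
    coordSpan K x ⊓ Vn K n = coordSpan K y ⊓ Vn K n := by
  suffices ∀ {x y : ℕ → Bool}, (∀ k < n, x k = y k) →
      coordSpan K x ⊓ Vn K n ≤ coordSpan K y ⊓ Vn K n from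
    le_antisymm (this h) (this fun k hk => (h k hk).symm)
  rintro x y h v ⟨hvx, hv⟩
  refine ⟨mem_coordSpan.2 fun i hi => ?_, hv⟩
  rcases lt_or_ge i n with hin | hin
  · exact mem_coordSpan.1 hvx i ((h i hin).trans hi)
  · exact hv i hin

theorem symbol_coordSpan (x : ℕ → Bool) : symbol (coordSpan K x) = x := by
  funext k
  rw [Bool.eq_iff_iff, symbol_eq_true_iff]
  constructor
  · rintro ⟨v, hv, -, hvk⟩
    by_contra hx
    simp [mem_coordSpan.1 hv k (by simpa using hx)] at hvk
  · refine fun hx => ⟨Finsupp.single k 1, mem_coordSpan.2 fun i hi => ?_, fun i hi => ?_, by simp⟩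
    · exact Finsupp.single_eq_of_ne (by rintro rfl; simp [hx] at hi)
    · exact Finsupp.single_eq_of_ne (by omega)

end Symbol

section Orbits

variable {K : Type} [Field K] {n : ℕ} {X Y Z : Submodule K (Vinf K)} {w : Vinf K}
  {x : ℕ → Bool}

theorem mem_Bgrp_of_forall_mem_Vn {g : Vinf K ≃ₗ[K] Vinf K}
    (h : ∀ n, ∀ v ∈ Vn K n, g v ∈ Vn K n) : g ∈ Bgrp K :=
  fun n => Submodule.eq_of_le_of_finrank_eq (Submodule.map_le_iff_le_comap.2 (h n))
    (g.finrank_map_eq _)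

/-- The transvection `v ↦ v + v_n w` with `w ∈ V_n`, as an element of `B`. These elements move
the pivot vectors at position `n` while fixing `V_n` pointwise. -/
noncomputable def transvection (hw : w ∈ Vn K n) : Bgrp K :=
  ⟨LinearEquiv.transvection (f := Finsupp.lapply n) (v := w) (hw n le_rfl),
    mem_Bgrp_of_forall_mem_Vn fun m v hv => by
      change v + v n • w ∈ Vn K m
      rcases le_or_gt m n with hmn | hmn
      · simpa [hv n hmn] using hv
      · exact Submodule.add_mem _ hv (Submodule.smul_mem _ _ (Vn_mono hmn.le hw))⟩

theorem transvection_smul (hw : w ∈ Vn K n) (v : Vinf K) : transvection hw • v = v + v n • w := rfl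

theorem transvection_smul_of_le_Vn (hw : w ∈ Vn K n) (hX : X ≤ Vn K n) :
    transvection hw • X = X := by
  have hfix : ∀ v ∈ X, transvection hw • v = v := fun v hv => by
    simp [transvection_smul, hX hv n le_rfl]
  ext v
  constructor
  · rintro ⟨u, hu, rfl⟩
    change transvection hw • u ∈ X
    rwa [hfix u hu]
  · exact fun hv => ⟨v, hv, hfix v hv⟩

theorem smul_sup_span (b : Bgrp K) (X : Submodule K (Vinf K)) (v : Vinf K) :
    b • (X ⊔ K ∙ v) = b • X ⊔ K ∙ (b • v) := by
  rw [Subgroup.smul_def, Submodule.smul_sup']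
  congr 1
  exact (Submodule.map_span _ _).trans (by rw [Set.image_singleton]; rfl)

theorem exists_smul_eq_of_inf_Vn_eq (hY : Y ≤ Vn K (n + 1)) (hZ : Z ≤ Vn K (n + 1))
    (hYZ : Y ⊓ Vn K n = Z ⊓ Vn K n) (hsymb : symbol Y n = symbol Z n) :
    ∃ b : Bgrp K, b • Y = Z := by
  by_cases hYn : (pivotVectors Y n).Nonempty
  · obtain ⟨z, hz⟩ := symbol_eq_true_iff.1 (hsymb ▸ symbol_eq_true_iff.2 hYn)
    obtain ⟨y, hy⟩ := hYn
    have hw : z - y ∈ Vn K n := mem_Vn_of_mem_Vn_succ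
      (Submodule.sub_mem _ hz.2.1 hy.2.1) (by simp [hz.2.2, hy.2.2])
    have hyz : transvection hw • y = z := by simp [transvection_smul, hy.2.2]
    refine ⟨transvection hw, ?_⟩
    calc transvection hw • Y
        = transvection hw • (Y ⊓ Vn K n ⊔ K ∙ y) := by
          rw [← inf_Vn_succ_eq_sup_span hy, inf_eq_left.2 hY]
      _ = Y ⊓ Vn K n ⊔ K ∙ z := by
          rw [smul_sup_span, transvection_smul_of_le_Vn hw inf_le_right, hyz]
      _ = Z := by rw [hYZ, ← inf_Vn_succ_eq_sup_span hz, inf_eq_left.2 hZ]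
  · have hZn : ¬ (pivotVectors Z n).Nonempty := by rwa [← symbol_eq_true_iff, ← hsymb,
      symbol_eq_true_iff]
    refine ⟨1, ?_⟩
    rw [one_smul, ← inf_eq_left.2 hY, ← inf_eq_left.2 hZ, inf_Vn_succ_eq_inf_Vn hYn,
      inf_Vn_succ_eq_inf_Vn hZn, hYZ]

theorem exists_smul_eq_of_symbol_eq (hY : Y ≤ Vn K n) (hZ : Z ≤ Vn K n)
    (h : ∀ k < n, symbol Y k = symbol Z k) : ∃ b : Bgrp K, b • Y = Z := by
  induction n generalizing Y Z with
  | zero =>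
    rw [Vn_zero, le_bot_iff] at hY hZ
    exact ⟨1, by rw [one_smul, hY, hZ]⟩
  | succ n ih =>
    obtain ⟨b, hb⟩ := ih (Y := Y ⊓ Vn K n) (Z := Z ⊓ Vn K n) inf_le_right inf_le_right
      fun k hk => by
        rw [symbol_inf_Vn hk, symbol_inf_Vn hk, h k (hk.trans n.lt_succ_self)]
    obtain ⟨c, hc⟩ := exists_smul_eq_of_inf_Vn_eq (Y := b • Y)
      ((smul_le_Vn_iff (smul_Vn b _)).2 hY) hZ ((smul_inf_Vn (smul_Vn b n) Y).trans hb)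
      (by rw [symbol_smul, h n n.lt_succ_self])
    exact ⟨c * b, by rw [mul_smul, hc]⟩

/-- The Schubert cell of the subspaces of `V_n` with symbol `x`; only `x_0, …, x_{n-1}` matter. -/
def schubertCell (K : Type) [Field K] (n : ℕ) (x : ℕ → Bool) : Set (Submodule K (Vinf K)) :=
  {Y | Y ≤ Vn K n ∧ ∀ k < n, symbol Y k = x k}

theorem inf_Vn_mem_schubertCell (h : ∀ k < n, symbol X k = x k) :
    X ⊓ Vn K n ∈ schubertCell K n x :=
  ⟨inf_le_right, fun k hk => (symbol_inf_Vn hk X).trans (h k hk)⟩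

theorem orbit_eq_schubertCell (hY : Y ∈ schubertCell K n x) :
    MulAction.orbit (Bgrp K) Y = schubertCell K n x := by
  ext Z
  constructor
  · rintro ⟨b, rfl⟩
    exact ⟨(smul_le_Vn_iff (smul_Vn b n)).2 hY.1, fun k hk =>
      (congrFun (symbol_smul b Y) k).trans (hY.2 k hk)⟩
  · exact fun hZ => exists_smul_eq_of_symbol_eq hY.1 hZ.1 fun k hk =>
      (hY.2 k hk).trans (hZ.2 k hk).symm

end Orbits

section Counting

variable {K : Type} [Field K] {n : ℕ} {Y : Submodule K (Vinf K)} {v : Vinf K} {x : ℕ → Bool}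

theorem finite_schubertCell [Finite K] (n : ℕ) (x : ℕ → Bool) : (schubertCell K n x).Finite :=
  (finite_setOf_le_Vn n).subset fun _ hY => hY.1

theorem schubertCell_zero (x : ℕ → Bool) : schubertCell K 0 x = {⊥} := by
  ext Y
  simp [schubertCell, Vn_zero]

theorem schubertCell_succ_of_false (hx : x n = false) :
    schubertCell K (n + 1) x = schubertCell K n x := by
  ext Y
  constructor
  · rintro ⟨hY, hYx⟩
    have hpiv : ¬ (pivotVectors Y n).Nonempty := by
      rw [← symbol_eq_true_iff, hYx n n.lt_succ_self, hx]
      exact Bool.false_ne_true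
    refine ⟨?_, fun k hk => hYx k (hk.trans n.lt_succ_self)⟩
    rw [← inf_eq_left.2 hY, inf_Vn_succ_eq_inf_Vn hpiv]
    exact inf_le_right
  · rintro ⟨hY, hYx⟩
    refine ⟨hY.trans (Vn_mono n.le_succ), fun k hk => ?_⟩
    rcases (Nat.lt_succ_iff.1 hk).lt_or_eq with hkn | rfl
    · exact hYx k hkn
    · rw [hx, ← Bool.not_eq_true, symbol_eq_true_iff]
      rintro ⟨v, hv⟩
      simpa [hv.2.2] using hY hv.1 k le_rfl

theorem mem_pivotVectors_sup_span (hv : v ∈ pivotVectors ⊤ n) : v ∈ pivotVectors (Y ⊔ K ∙ v) n :=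
  ⟨Submodule.mem_sup_right (Submodule.mem_span_singleton_self v), hv.2⟩

theorem sup_span_mem_schubertCell (hx : x n = true) (hY : Y ∈ schubertCell K n x)
    (hv : v ∈ pivotVectors ⊤ n) : Y ⊔ K ∙ v ∈ schubertCell K (n + 1) x := by
  refine ⟨sup_le (hY.1.trans (Vn_mono n.le_succ))
    ((Submodule.span_singleton_le_iff_mem _ _).2 hv.2.1), fun k hk => ?_⟩
  rcases (Nat.lt_succ_iff.1 hk).lt_or_eq with hkn | rfl
  · rw [← hY.2 k hkn, ← symbol_inf_Vn hkn, sup_span_inf_Vn hY.1 hv]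
  · rw [hx, symbol_eq_true_iff]
    exact ⟨v, mem_pivotVectors_sup_span hv⟩

/-- A subspace in a cell with a pivot at `n`, together with a pivot vector, amounts to a subspace
of `V_n` together with a pivot vector. -/
noncomputable def schubertCellSuccEquiv (hx : x n = true) :
    (Σ Z : schubertCell K (n + 1) x, pivotVectors Z.1 n) ≃
      schubertCell K n x × pivotVectors (⊤ : Submodule K (Vinf K)) n where
  toFun p := (⟨p.1 ⊓ Vn K n, inf_Vn_mem_schubertCell fun k hk =>
    p.1.2.2 k (hk.trans n.lt_succ_self)⟩, ⟨p.2, trivial, p.2.2.2⟩)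
  invFun p := ⟨⟨p.1 ⊔ K ∙ (p.2 : Vinf K), sup_span_mem_schubertCell hx p.1.2 p.2.2⟩,
    ⟨p.2, mem_pivotVectors_sup_span p.2.2⟩⟩
  left_inv := by
    rintro ⟨⟨Z, hZ⟩, v, hv⟩
    have hsup : Z ⊓ Vn K n ⊔ K ∙ v = Z := by
      rw [← inf_Vn_succ_eq_sup_span hv, inf_eq_left.2 hZ.1]
    exact Sigma.subtype_ext (Subtype.ext hsup) rfl
  right_inv p := Prod.ext (Subtype.ext (sup_span_inf_Vn p.1.2.1 p.2.2)) rfl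

theorem finrank_inf_Vn_of_symbol_eq (h : ∀ k < n, symbol Y k = x k) :
    Module.finrank K ↥(Y ⊓ Vn K n) = ∑ k ∈ Finset.range n, (x k).toNat := by
  rw [finrank_inf_Vn]
  exact Finset.sum_congr rfl fun k hk => by
    rw [symInc_eq_toNat_symbol, h k (Finset.mem_range.1 hk)]

theorem ncard_schubertCell_succ_mul [Finite K] (hx : x n = true) :
    (schubertCell K (n + 1) x).ncard * Nat.card K ^ (∑ k ∈ Finset.range n, (x k).toNat) =
      (schubertCell K n x).ncard * Nat.card K ^ n := by
  have hcardZ (Z : schubertCell K (n + 1) x) : Nat.card (pivotVectors Z.1 n) =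
      Nat.card K ^ (∑ k ∈ Finset.range n, (x k).toNat) := by
    rw [natCard_pivotVectors (symbol_eq_true_iff.1 ((Z.2.2 n n.lt_succ_self).trans hx)),
      Module.natCard_eq_pow_finrank (K := K),
      finrank_inf_Vn_of_symbol_eq fun k hk => Z.2.2 k (hk.trans n.lt_succ_self)]
  have hcardTop : Nat.card (pivotVectors (⊤ : Submodule K (Vinf K)) n) = Nat.card K ^ n := by
    rw [natCard_pivotVectors ⟨(Finsupp.single n 1 : Vinf K), Submodule.mem_top, fun i hi =>
      Finsupp.single_eq_of_ne (by omega), by simp⟩, top_inf_eq,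
      Module.natCard_eq_pow_finrank (K := K), finrank_Vn]
  have := (finite_schubertCell (K := K) (n + 1) x).fintype
  have (Z : schubertCell K (n + 1) x) : Finite (pivotVectors Z.1 n) := finite_pivotVectors _ _
  have hequiv := Nat.card_congr (schubertCellSuccEquiv (K := K) hx)
  rw [Nat.card_prod, hcardTop, Nat.card_sigma] at hequiv
  simpa [hcardZ, Set.ncard_def, Nat.card_coe_set_eq] using hequiv

/-- With `d` the number of pivots, the cell has `q ^ (∑_{k < n} (k + 1) x_k - d (d + 1) / 2)`
elements. -/
theorem ncard_schubertCell_mul [Finite K] (n : ℕ) (x : ℕ → Bool) :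
    (schubertCell K n x).ncard *
        Nat.card K ^ (∑ i ∈ Finset.range (∑ k ∈ Finset.range n, (x k).toNat), (i + 1)) =
      Nat.card K ^ (∑ k ∈ Finset.range n, (k + 1) * (x k).toNat) := by
  induction n with
  | zero => simp [schubertCell_zero]
  | succ n ih =>
    rw [Finset.sum_range_succ, Finset.sum_range_succ _ n]
    cases hx : x n
    · simpa [schubertCell_succ_of_false hx] using ih
    · have hsucc := ncard_schubertCell_succ_mul (K := K) hx
      rw [Bool.toNat_true, mul_one, Finset.sum_range_succ, pow_add _ _ (n + 1), ← ih]
      set d := ∑ k ∈ Finset.range n, (x k).toNat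
      linear_combination Nat.card K ^ (∑ i ∈ Finset.range d, (i + 1)) * Nat.card K * hsucc

end Counting

section Haar

theorem ncard_orbit_mul_measure_smul_eq {G α : Type*} [Group G] [MeasurableSpace G]
    [MeasurableMul G] [MulAction G α] (μ : Measure G) [μ.IsMulLeftInvariant] {a b : α}
    (hfin : (MulAction.orbit G a).Finite)
    (hstab : MeasurableSet (MulAction.stabilizer G a : Set G)) (hb : b ∈ MulAction.orbit G a) :
    ((MulAction.orbit G a).ncard : ENNReal) * μ {g | g • a = b} = μ Set.univ := by
  have hindex := MulAction.index_stabilizer G a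
  have : (MulAction.stabilizer G a).FiniteIndex :=
    ⟨hindex ▸ ((MulAction.nonempty_orbit a).ncard_pos hfin).ne'⟩
  obtain ⟨h, rfl⟩ := hb
  have hcoset : {g : G | g • a = h • a} = (h⁻¹ * ·) ⁻¹' (MulAction.stabilizer G a : Set G) := by
    ext g
    simp [mul_smul, inv_smul_eq_iff]
  rw [hcoset, measure_preimage_mul, ← hindex, Subgroup.index_mul_measure _ hstab]

variable {K : Type} [Field K]

theorem measurable_Bgrp_iff {α : Type*} [MeasurableSpace α] {f : α → Bgrp K} :
    Measurable f ↔
      ∀ i, @Measurable α (Vinf K) _ ⊤ fun a => f a • (Finsupp.single i 1 : Vinf K) :=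
  let _ : MeasurableSpace (Vinf K) := ⊤
  measurable_comap_iff.trans measurable_pi_iff

theorem measurable_smul_Vinf [Countable K] (v : Vinf K) :
    @Measurable (Bgrp K) (Vinf K) _ ⊤ fun b => b • v := by
  let _ : MeasurableSpace (Vinf K) := ⊤
  have hsum (b : Bgrp K) : b • v = ∑ i ∈ v.support, v i • b • (Finsupp.single i 1 : Vinf K) := by
    conv_lhs => rw [← Finsupp.sum_single v, Finsupp.sum, Finset.smul_sum]
    exact Finset.sum_congr rfl fun i _ => by rw [← Finsupp.smul_single_one, smul_comm]
  simp_rw [hsum]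
  exact Finset.measurable_sum _ fun i _ =>
    (Measurable.of_discrete (f := fun w : Vinf K => v i • w)).comp
      (measurable_Bgrp_iff.1 measurable_id i)

instance measurableMul_Bgrp [Countable K] : MeasurableMul (Bgrp K) where
  measurable_const_mul c := by
    let _ : MeasurableSpace (Vinf K) := ⊤
    exact measurable_Bgrp_iff.2 fun i =>
      (Measurable.of_discrete (f := fun w : Vinf K => c • w)).comp (measurable_smul_Vinf _)
  measurable_mul_const c :=
    measurable_Bgrp_iff.2 fun i => measurable_smul_Vinf (c • (Finsupp.single i 1 : Vinf K))

theorem smul_eq_iff_forall_mem {b : Bgrp K} {X Y : Submodule K (Vinf K)} :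
    b • X = Y ↔ ∀ v, v ∈ X ↔ b • v ∈ Y := by
  rw [← eq_inv_smul_iff, SetLike.ext_iff]
  exact forall_congr' fun v => iff_congr Iff.rfl Set.mem_inv_smul_set_iff

theorem measurableSet_setOf_smul_eq [Countable K] (X Y : Submodule K (Vinf K)) :
    MeasurableSet {b : Bgrp K | b • X = Y} := by
  let _ : MeasurableSpace (Vinf K) := ⊤
  simp_rw [smul_eq_iff_forall_mem]
  exact (Measurable.forall fun v => measurable_const.iff
    ((Measurable.of_discrete (f := (· ∈ Y))).comp (measurable_smul_Vinf v))).setOf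

theorem ncard_schubertCell_mul_measure [Finite K] (μ : Measure (Bgrp K)) [μ.IsMulLeftInvariant]
    {n : ℕ} {x : ℕ → Bool} {Y Z : Submodule K (Vinf K)} (hY : Y ∈ schubertCell K n x)
    (hZ : Z ∈ schubertCell K n x) :
    ((schubertCell K n x).ncard : ENNReal) * μ {b | b • Y = Z} = μ Set.univ := by
  rw [← orbit_eq_schubertCell hY] at hZ ⊢
  exact ncard_orbit_mul_measure_smul_eq μ (orbit_eq_schubertCell hY ▸ finite_schubertCell n x)
    (measurableSet_setOf_smul_eq Y Y) hZ

end Haar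

section Cylinders

variable {K : Type} [Field K] {m n N : ℕ} {X Y Z : Submodule K (Vinf K)}
  {g : Vinf K ≃ₗ[K] Vinf K}

/-- The cylinder set of level `n` over `Y` in the grassmannian. -/
def cylinder (n : ℕ) (Y : Submodule K (Vinf K)) : Set (Submodule K (Vinf K)) :=
  {X | X ⊓ Vn K n = Y}

theorem measurableSet_cylinder (n : ℕ) (Y : Submodule K (Vinf K)) :
    MeasurableSet (cylinder n Y) :=
  MeasurableSpace.measurableSet_generateFrom ⟨n, Y, rfl⟩

theorem le_Vn_of_mem_cylinder (hX : X ∈ cylinder n Y) : Y ≤ Vn K n :=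
  hX.symm.trans_le inf_le_right

theorem inf_Vn_eq_of_mem_cylinder (h : m ≤ n) (hX : X ∈ cylinder n Y) :
    X ⊓ Vn K m = Y ⊓ Vn K m := by
  rw [← inf_Vn_inf_Vn h, hX]

theorem cylinder_eq_biUnion (h : m ≤ n) (Y : Submodule K (Vinf K)) :
    cylinder m Y = ⋃ Z ∈ {Z | Z ≤ Vn K n ∧ Z ⊓ Vn K m = Y}, cylinder n Z := by
  ext X
  simp only [Set.mem_iUnion, exists_prop]
  constructor
  · exact fun hX => ⟨X ⊓ Vn K n, ⟨inf_le_right, (inf_Vn_inf_Vn h X).trans hX⟩, rfl⟩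
  · rintro ⟨Z, ⟨-, rfl⟩, hX⟩
    exact inf_Vn_eq_of_mem_cylinder h hX

theorem cylinder_subset_cylinder (h : m ≤ n)
    (hne : (cylinder m Y ∩ cylinder n Z).Nonempty) : cylinder n Z ⊆ cylinder m Y := by
  obtain ⟨X, rfl, hXZ⟩ := hne
  exact fun W hW => (inf_Vn_eq_of_mem_cylinder h hW).trans (inf_Vn_eq_of_mem_cylinder h hXZ).symm

/-- The cylinders of level at least `N`; an element of `GLB` permutes them once `N` is large. -/
def cylindersFrom (K : Type) [Field K] (N : ℕ) : Set (Set (Submodule K (Vinf K))) :=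
  {A | ∃ n ≥ N, ∃ Y, A = cylinder n Y}

theorem isPiSystem_cylindersFrom : IsPiSystem (cylindersFrom K N) := by
  rintro _ ⟨m, hm, Y, rfl⟩ _ ⟨n, hn, Z, rfl⟩ hne
  rcases le_total m n with h | h
  · rw [Set.inter_eq_right.2 (cylinder_subset_cylinder h hne)]
    exact ⟨n, hn, Z, rfl⟩
  · rw [Set.inter_eq_left.2 (cylinder_subset_cylinder h (by rwa [Set.inter_comm]))]
    exact ⟨m, hm, Y, rfl⟩

theorem generateFrom_cylindersFrom [Finite K] (N : ℕ) :
    mGr K = MeasurableSpace.generateFrom (cylindersFrom K N) := by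
  apply le_antisymm
  · refine MeasurableSpace.generateFrom_le ?_
    rintro _ ⟨m, Y, rfl⟩
    change MeasurableSet[MeasurableSpace.generateFrom (cylindersFrom K N)] (cylinder m Y)
    rw [cylinder_eq_biUnion (le_max_left m N)]
    exact MeasurableSet.biUnion
      ((finite_setOf_le_Vn (max m N)).subset fun Z hZ => hZ.1).countable fun Z _ =>
        MeasurableSpace.measurableSet_generateFrom ⟨_, le_max_right m N, Z, rfl⟩
  · refine MeasurableSpace.generateFrom_le ?_
    rintro _ ⟨n, -, Y, rfl⟩
    exact measurableSet_cylinder n Y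

theorem measure_ext_of_cylinder [Finite K] {μ ν : Measure (Submodule K (Vinf K))}
    [IsFiniteMeasure μ] (N : ℕ)
    (h : ∀ n ≥ N, ∀ Y ≤ Vn K n, μ (cylinder n Y) = ν (cylinder n Y)) : μ = ν := by
  refine Measure.ext_of_generateFrom_of_cover_subset (generateFrom_cylindersFrom N)
    isPiSystem_cylindersFrom (T := cylinder N '' {Y | Y ≤ Vn K N}) ?_
    ((finite_setOf_le_Vn N).image _).countable ?_ (fun _ _ => measure_ne_top μ _) ?_
  · rintro _ ⟨Y, -, rfl⟩
    exact ⟨N, le_rfl, Y, rfl⟩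
  · exact Set.eq_univ_of_forall fun X =>
      ⟨_, ⟨X ⊓ Vn K N, (inf_le_right : X ⊓ Vn K N ≤ Vn K N), rfl⟩, rfl⟩
  · rintro _ ⟨n, hn, Y, rfl⟩
    by_cases hY : Y ≤ Vn K n
    · exact h n hn Y hY
    · have hempty : cylinder n Y = ∅ := Set.eq_empty_of_forall_notMem fun X hX =>
        hY (le_Vn_of_mem_cylinder hX)
      rw [hempty, measure_empty, measure_empty]

theorem preimage_inv_smul_cylinder (hg : g • Vn K n = Vn K n) (Y : Submodule K (Vinf K)) :
    (g⁻¹ • ·) ⁻¹' cylinder n Y = cylinder n (g • Y) := by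
  ext X
  change (g⁻¹ • X) ⊓ Vn K n = Y ↔ X ⊓ Vn K n = g • Y
  rw [smul_inf_Vn (inv_smul_eq_iff.2 hg.symm), inv_smul_eq_iff]

theorem measurable_inv_smul [Finite K] (hg : g ∈ GLBgrp K) :
    Measurable fun X : Submodule K (Vinf K) => g⁻¹ • X := by
  obtain ⟨N, hg⟩ := hg
  suffices @Measurable _ _ (mGr K) (MeasurableSpace.generateFrom (cylindersFrom K N))
      fun X => g⁻¹ • X by rwa [← generateFrom_cylindersFrom N] at this
  refine measurable_generateFrom ?_
  rintro _ ⟨n, hn, Y, rfl⟩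
  rw [preimage_inv_smul_cylinder (hg n hn)]
  exact measurableSet_cylinder n _

end Cylinders

section Pushforward

variable {K : Type} [Field K] {n : ℕ} {Y : Submodule K (Vinf K)} {x y : ℕ → Bool}

theorem phiMap_inf_Vn (x : ℕ → Bool) (b : Bgrp K) (n : ℕ) :
    phiMap K (x, b) ⊓ Vn K n = b • (coordSpan K x ⊓ Vn K n) :=
  smul_inf_Vn (smul_Vn b n) _

theorem symbol_phiMap (x : ℕ → Bool) (b : Bgrp K) : symbol (phiMap K (x, b)) = x :=
  (symbol_smul b _).trans (symbol_coordSpan x)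

/-- The words that agree with `x` in the first `n` letters. -/
def wordCylinder (n : ℕ) (x : ℕ → Bool) : Set (ℕ → Bool) := {ω | ∀ i : Fin n, ω i = x i}

theorem measurableSet_wordCylinder (n : ℕ) (x : ℕ → Bool) : MeasurableSet (wordCylinder n x) :=
  (Measurable.forall fun i : Fin n =>
    (Measurable.of_discrete (f := (· = x i))).comp (measurable_pi_apply (i : ℕ))).setOf

theorem phiMap_preimage_cylinder (n : ℕ) (Y : Submodule K (Vinf K)) :
    phiMap K ⁻¹' cylinder n Y =
      wordCylinder n (symbol Y) ×ˢ {b | b • (coordSpan K (symbol Y) ⊓ Vn K n) = Y} := by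
  ext ⟨x, b⟩
  change phiMap K (x, b) ⊓ Vn K n = Y ↔
    (∀ i : Fin n, x i = symbol Y i) ∧ b • (coordSpan K (symbol Y) ⊓ Vn K n) = Y
  have hspan (hx : ∀ i : Fin n, x i = symbol Y i) :
      phiMap K (x, b) ⊓ Vn K n = b • (coordSpan K (symbol Y) ⊓ Vn K n) := by
    rw [phiMap_inf_Vn, coordSpan_inf_Vn_congr fun k hk => hx ⟨k, hk⟩]
  refine ⟨fun hY => ?_, fun ⟨hx, hb⟩ => (hspan hx).trans hb⟩
  have hx (i : Fin n) : x i = symbol Y i := by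
    rw [← hY, symbol_inf_Vn i.2, symbol_phiMap]
  exact ⟨hx, (hspan hx).symm.trans hY⟩

theorem measurable_phiMap [Countable K] : Measurable (phiMap K) := by
  refine measurable_generateFrom ?_
  rintro _ ⟨n, Y, rfl⟩
  change MeasurableSet (phiMap K ⁻¹' cylinder n Y)
  rw [phiMap_preimage_cylinder]
  exact (measurableSet_wordCylinder n _).prod (measurableSet_setOf_smul_eq _ _)

/-- The sum `∑ k * Sym(X)_k` (with `k` counted from `1`) over the first `n` entries of the
symbol. -/
noncomputable def symbolWeight (n : ℕ) (X : Submodule K (Vinf K)) : ℕ :=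
  ∑ k ∈ Finset.range n, (k + 1) * symInc K X k

theorem symbolWeight_eq (n : ℕ) (X : Submodule K (Vinf K)) :
    symbolWeight n X = ∑ k ∈ Finset.range n, (k + 1) * (symbol X k).toNat := by
  simp only [symbolWeight, symInc_eq_toNat_symbol]

theorem symbolWeight_inf_Vn (n : ℕ) (X : Submodule K (Vinf K)) :
    symbolWeight n (X ⊓ Vn K n) = symbolWeight n X :=
  Finset.sum_congr rfl fun k hk => by rw [symInc_inf_Vn (Finset.mem_range.1 hk)]

theorem sum_toNat_symbol (hY : Y ≤ Vn K n) :
    ∑ k ∈ Finset.range n, (symbol Y k).toNat = Module.finrank K Y := by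
  rw [← finrank_inf_Vn_of_symbol_eq fun _ _ => rfl, inf_eq_left.2 hY]

theorem map_phiMap_cylinder_mul [Finite K] (μ : Measure (ℕ → Bool)) (ν : Measure (Bgrp K))
    [SFinite ν] [ν.IsMulLeftInvariant] (hY : Y ≤ Vn K n) :
    (μ.prod ν).map (phiMap K) (cylinder n Y) * (Nat.card K : ENNReal) ^ symbolWeight n Y =
      μ (wordCylinder n (symbol Y)) * ν Set.univ *
        (Nat.card K : ENNReal) ^ (∑ i ∈ Finset.range (Module.finrank K Y), (i + 1)) := by
  have hcell : Y ∈ schubertCell K n (symbol Y) := ⟨hY, fun _ _ => rfl⟩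
  have hspan : coordSpan K (symbol Y) ⊓ Vn K n ∈ schubertCell K n (symbol Y) :=
    inf_Vn_mem_schubertCell fun k _ => congrFun (symbol_coordSpan _) k
  have hcard := congrArg (Nat.cast (R := ENNReal)) (ncard_schubertCell_mul (K := K) n (symbol Y))
  rw [sum_toNat_symbol hY, ← symbolWeight_eq, Nat.cast_mul, Nat.cast_pow, Nat.cast_pow] at hcard
  rw [Measure.map_apply measurable_phiMap (measurableSet_cylinder n Y), phiMap_preimage_cylinder,
    Measure.prod_prod, ← ncard_schubertCell_mul_measure ν hspan hcell, ← hcard]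
  ring

/-- The laws on words for which the mass of a finite word is invariant under permutations of its
letters. -/
def IsExchangeable (μ : Measure (ℕ → Bool)) : Prop :=
  ∀ (n : ℕ) (c : Fin n → Bool) (σ : Equiv.Perm (Fin n)),
    μ {ω | ∀ i : Fin n, ω i = c (σ i)} = μ {ω | ∀ i : Fin n, ω i = c i}

theorem isExchangeable_of_prod {μ : Measure (ℕ → Bool)} {p : Bool → ENNReal}
    (h : ∀ (n : ℕ) (c : Fin n → Bool), μ {ω | ∀ i : Fin n, ω i = c i} = ∏ i, p (c i)) :
    IsExchangeable μ := fun n c σ => by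
  rw [h n fun i => c (σ i), h n c, Equiv.prod_comp σ fun i => p (c i)]

theorem isProbabilityMeasure_of_prod {μ : Measure (ℕ → Bool)} {p : Bool → ENNReal}
    (h : ∀ (n : ℕ) (c : Fin n → Bool), μ {ω | ∀ i : Fin n, ω i = c i} = ∏ i, p (c i)) :
    IsProbabilityMeasure μ :=
  ⟨by simpa using h 0 Fin.elim0⟩

theorem exists_perm_eq_comp {ι : Type*} [Fintype ι] {c d : ι → Bool}
    (h : ∑ i, (c i).toNat = ∑ i, (d i).toNat) : ∃ σ : Equiv.Perm ι, d = c ∘ σ := by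
  classical
  have hcard (f : ι → Bool) : Fintype.card {i // f i = true} = ∑ i, (f i).toNat := by
    rw [Fintype.card_subtype, Finset.card_filter]
    exact Finset.sum_congr rfl fun i _ => by cases f i <;> rfl
  let e : {i // d i = true} ≃ {i // c i = true} :=
    Fintype.equivOfCardEq (by rw [hcard, hcard, h])
  refine ⟨e.extendSubtype, funext fun i => Bool.eq_iff_iff.2 ⟨e.extendSubtype_mem i, ?_⟩⟩
  exact not_imp_not.1 (e.extendSubtype_not_mem i)

theorem IsExchangeable.measure_wordCylinder_eq {μ : Measure (ℕ → Bool)} (hμ : IsExchangeable μ)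
    (h : ∑ k ∈ Finset.range n, (x k).toNat = ∑ k ∈ Finset.range n, (y k).toNat) :
    μ (wordCylinder n x) = μ (wordCylinder n y) := by
  rw [Finset.sum_range, Finset.sum_range] at h
  obtain ⟨σ, hσ⟩ := exists_perm_eq_comp (c := fun i : Fin n => x i) (d := fun i : Fin n => y i) h
  have hy : wordCylinder n y = {ω | ∀ i : Fin n, ω i = x (σ i)} :=
    Set.ext fun ω => forall_congr' fun i => by rw [show y i = x (σ i) from congrFun hσ i]
  rw [hy]
  exact (hμ n (fun i => x i) σ).symm

/-- The mass of a cylinder of level `n` over a `d`-dimensional subspace `Y` is `q` to the power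
`-symbolWeight n Y`, times a factor depending only on `n` and `d`. -/
def IsWeightHomogeneous (η : Measure (Submodule K (Vinf K))) : Prop :=
  ∀ (n : ℕ) (Y Z : Submodule K (Vinf K)), Y ≤ Vn K n → Z ≤ Vn K n →
    Module.finrank K Y = Module.finrank K Z →
    η (cylinder n Y) * (Nat.card K : ENNReal) ^ symbolWeight n Y =
      η (cylinder n Z) * (Nat.card K : ENNReal) ^ symbolWeight n Z

theorem isWeightHomogeneous_map_phiMap [Finite K] {μ : Measure (ℕ → Bool)}
    (hμ : IsExchangeable μ) (ν : Measure (Bgrp K)) [SFinite ν] [ν.IsMulLeftInvariant] :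
    IsWeightHomogeneous ((μ.prod ν).map (phiMap K)) := fun n Y Z hY hZ hYZ => by
  have hword : μ (wordCylinder n (symbol Y)) = μ (wordCylinder n (symbol Z)) :=
    hμ.measure_wordCylinder_eq (by rw [sum_toNat_symbol hY, sum_toNat_symbol hZ, hYZ])
  rw [map_phiMap_cylinder_mul μ ν hY, map_phiMap_cylinder_mul μ ν hZ, hword, hYZ]

end Pushforward

section Cocycle

variable {K : Type} [Field K] {n N : ℕ} {X Y : Submodule K (Vinf K)}
  {g : Vinf K ≃ₗ[K] Vinf K}

/-- The `k`-th term of the exponent of the fundamental cocycle. -/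
noncomputable def cocycleTerm (g : Vinf K ≃ₗ[K] Vinf K) (X : Submodule K (Vinf K)) (k : ℕ) : ℤ :=
  ((k : ℤ) + 1) * ((symInc K X k : ℤ) - (symInc K (g • X) k : ℤ))

theorem support_cocycleTerm_subset (hg : ∀ n ≥ N, g • Vn K n = Vn K n)
    (X : Submodule K (Vinf K)) : Function.support (cocycleTerm g X) ⊆ Finset.range N := by
  refine Function.support_subset_iff'.2 fun k hk => ?_
  have hk : N ≤ k := by simpa using hk
  rw [cocycleTerm, symInc_smul (hg k hk) (hg (k + 1) (by omega)), sub_self, mul_zero]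

theorem finite_support_cocycleTerm (hg : g ∈ GLBgrp K) (X : Submodule K (Vinf K)) :
    (Function.support (cocycleTerm g X)).Finite := by
  obtain ⟨N, hg⟩ := hg
  exact (Finset.finite_toSet _).subset (support_cocycleTerm_subset hg X)

theorem finsum_cocycleTerm (hg : ∀ n ≥ N, g • Vn K n = Vn K n) (X : Submodule K (Vinf K)) :
    ∑ᶠ k, cocycleTerm g X k = (symbolWeight N X : ℤ) - symbolWeight N (g • X) := by
  rw [finsum_eq_sum_of_support_subset _ (support_cocycleTerm_subset hg X)]
  simp only [cocycleTerm, symbolWeight, mul_sub, Finset.sum_sub_distrib, Nat.cast_sum,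
    Nat.cast_mul, Nat.cast_add, Nat.cast_one]

theorem finsum_cocycleTerm_of_mem_cylinder (hg : ∀ n ≥ N, g • Vn K n = Vn K n)
    (hX : X ∈ cylinder N Y) :
    ∑ᶠ k, cocycleTerm g X k = (symbolWeight N Y : ℤ) - symbolWeight N (g • Y) := by
  rw [finsum_cocycleTerm hg, ← symbolWeight_inf_Vn N X, ← symbolWeight_inf_Vn N (g • X),
    smul_inf_Vn (hg N le_rfl), show X ⊓ Vn K N = Y from hX]

theorem ofReal_natCast_zpow_sub_mul_pow {q : ℕ} (hq : 0 < q) (a b : ℕ) :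
    ENNReal.ofReal ((q : ℝ) ^ ((a : ℤ) - b)) * (q : ENNReal) ^ b = (q : ENNReal) ^ a := by
  have hq' : (0 : ℝ) < q := Nat.cast_pos.2 hq
  rw [← ENNReal.ofReal_natCast, ← ENNReal.ofReal_pow hq'.le, ← ENNReal.ofReal_pow hq'.le,
    ← ENNReal.ofReal_mul (zpow_nonneg hq'.le _), zpow_sub₀ hq'.ne', zpow_natCast, zpow_natCast,
    div_mul_cancel₀ _ (pow_ne_zero b hq'.ne')]

theorem IsWeightHomogeneous.measure_cylinder_smul [Finite K]
    {η : Measure (Submodule K (Vinf K))} (hη : IsWeightHomogeneous η)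
    (hg : g • Vn K n = Vn K n) (hY : Y ≤ Vn K n) :
    η (cylinder n (g • Y)) =
      ENNReal.ofReal ((Nat.card K : ℝ) ^ ((symbolWeight n Y : ℤ) - symbolWeight n (g • Y))) *
        η (cylinder n Y) := by
  have hq : (Nat.card K : ENNReal) ^ symbolWeight n (g • Y) ≠ 0 :=
    pow_ne_zero _ (Nat.cast_ne_zero.2 Nat.card_pos.ne')
  have hmass := hη n (g • Y) Y ((smul_le_Vn_iff hg).2 hY) hY (finrank_smul_submodule g Y)
  rw [← ENNReal.mul_left_inj hq (ENNReal.pow_ne_top (ENNReal.natCast_ne_top _)), hmass,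
    mul_right_comm, ofReal_natCast_zpow_sub_mul_pow Nat.card_pos, mul_comm]

theorem IsWeightHomogeneous.map_inv_smul [Finite K] {η : Measure (Submodule K (Vinf K))}
    [IsFiniteMeasure η] (hη : IsWeightHomogeneous η) (hg : g ∈ GLBgrp K) :
    η.map (g⁻¹ • ·) =
      η.withDensity fun X => ENNReal.ofReal ((Nat.card K : ℝ) ^ ∑ᶠ k, cocycleTerm g X k) := by
  have hmeas := measurable_inv_smul hg
  obtain ⟨N, hg⟩ := hg
  refine measure_ext_of_cylinder N fun n hn Y hY => ?_
  have hdensity : Set.EqOn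
      (fun X => ENNReal.ofReal ((Nat.card K : ℝ) ^ ∑ᶠ k, cocycleTerm g X k))
      (fun _ => ENNReal.ofReal
        ((Nat.card K : ℝ) ^ ((symbolWeight n Y : ℤ) - symbolWeight n (g • Y))))
      (cylinder n Y) := fun X hX => by
    simp only [finsum_cocycleTerm_of_mem_cylinder (fun m hm => hg m (hn.trans hm)) hX]
  rw [Measure.map_apply hmeas (measurableSet_cylinder n Y), preimage_inv_smul_cylinder (hg n hn),
    withDensity_apply _ (measurableSet_cylinder n Y),
    setLIntegral_congr_fun (measurableSet_cylinder n Y) hdensity, setLIntegral_const]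
  exact hη.measure_cylinder_smul (hg n hn) hY

theorem IsWeightHomogeneous.measure_image_smul [Finite K] {η : Measure (Submodule K (Vinf K))}
    [IsFiniteMeasure η] (hη : IsWeightHomogeneous η) (hg : g ∈ GLBgrp K)
    {A : Set (Submodule K (Vinf K))} (hA : MeasurableSet A) :
    η ((g • ·) '' A) =
      ∫⁻ X in A, ENNReal.ofReal ((Nat.card K : ℝ) ^ ∑ᶠ k, cocycleTerm g X k) ∂η := by
  rw [← withDensity_apply _ hA, ← hη.map_inv_smul hg,
    Measure.map_apply (measurable_inv_smul hg) hA, Set.image_smul, Set.preimage_smul_inv]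

end Cocycle

theorem eta_quasi_invariant_with_cocycle_general {K : Type} [Field K] [Finite K]
    {μ : Measure (ℕ → Bool)} [IsFiniteMeasure μ] (hμ : IsExchangeable μ)
    (ν : Measure (Bgrp K)) [IsFiniteMeasure ν] [ν.IsMulLeftInvariant]
    {g : Vinf K ≃ₗ[K] Vinf K} (hg : g ∈ GLBgrp K) :
    (∀ X, (Function.support (cocycleTerm g X)).Finite) ∧
      ∀ A, MeasurableSet A → (μ.prod ν).map (phiMap K) ((g • ·) '' A) =
        ∫⁻ X in A, ENNReal.ofReal ((Nat.card K : ℝ) ^ ∑ᶠ k, cocycleTerm g X k)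
          ∂(μ.prod ν).map (phiMap K) :=
  ⟨finite_support_cocycleTerm hg, fun _ =>
    (isWeightHomogeneous_map_phiMap hμ ν).measure_image_smul hg⟩

/-- **Proposition 5.7** (fundamental cocycle of the `GLB`-action on the grassmannian).
`μBer` is the Bernoulli measure on `{0,1}^ℕ` with parameter `t₁`; `μB` is the Haar probability
measure of the compact group `B` (characterized as a left-invariant probability measure);
`η = η_{t₁,t₂}` is the pushforward of `μBer ⊗ μB` under `φ(x,g) = g·C(x)`. Then for every
`g ∈ GLB` and every `X ∈ Gr(V)` the sum `∑_k k·(Sym(X)_k - Sym(gX)_k)` has finitely many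
nonzero terms, and for every measurable `A ⊆ Gr(V)`,
`η(g·A) = ∫_A q^{∑_k k·(Sym(X)_k - Sym(gX)_k)} dη(X)`. -/
theorem eta_quasi_invariant_with_cocycle
    (t₁ t₂ : ℝ) (ht₁ : 0 ≤ t₁) (ht₂ : 0 ≤ t₂) (hsum : t₁ + t₂ = 1)
    (μBer : Measure (ℕ → Bool))
    (hBer : ∀ (n : ℕ) (c : Fin n → Bool),
      μBer {ω | ∀ i : Fin n, ω (i : ℕ) = c i}
        = ∏ i : Fin n, ENNReal.ofReal (if c i then t₁ else t₂))
    (μB : Measure ↥(Bgrp F)) (hμBprob : IsProbabilityMeasure μB)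
    (hμBinv : ∀ (b : ↥(Bgrp F)) (S : Set ↥(Bgrp F)), MeasurableSet S →
      μB ((fun x => b * x) ⁻¹' S) = μB S)
    (η : Measure (Submodule F (Vinf F)))
    (hη : ∀ A : Set (Submodule F (Vinf F)), MeasurableSet A →
      η A = (μBer.prod μB) (phiMap F ⁻¹' A)) :
    (∀ g : (Vinf F) ≃ₗ[F] (Vinf F), g ∈ GLBgrp F → ∀ X : Submodule F (Vinf F),
      (Function.support (fun k : ℕ => ((k : ℤ) + 1) *
        ((symInc F X k : ℤ)
          - (symInc F (Submodule.map (g : (Vinf F) →ₗ[F] (Vinf F)) X) k : ℤ)))).Finite) ∧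
    (∀ g : (Vinf F) ≃ₗ[F] (Vinf F), g ∈ GLBgrp F →
      ∀ A : Set (Submodule F (Vinf F)), MeasurableSet A →
      η ((fun X => Submodule.map (g : (Vinf F) →ₗ[F] (Vinf F)) X) '' A)
        = ∫⁻ X in A, ENNReal.ofReal ((Fintype.card F : ℝ) ^
            (∑ᶠ k : ℕ, ((k : ℤ) + 1) *
              ((symInc F X k : ℤ)
                - (symInc F (Submodule.map (g : (Vinf F) →ₗ[F] (Vinf F)) X) k : ℤ)))) ∂η) := by
  have := isProbabilityMeasure_of_prod (p := fun a => ENNReal.ofReal (if a then t₁ else t₂)) hBer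
  have hexch := isExchangeable_of_prod (p := fun a => ENNReal.ofReal (if a then t₁ else t₂)) hBer
  have := (forall_measure_preimage_mul_iff μB).1 hμBinv
  obtain rfl : η = (μBer.prod μB).map (phiMap F) := Measure.ext fun A hA => by
    rw [hη A hA, Measure.map_apply measurable_phiMap hA]
  rw [← Nat.card_eq_fintype_card]
  have hcocycle {g : Vinf F ≃ₗ[F] Vinf F} (hg : g ∈ GLBgrp F) :=
    eta_quasi_invariant_with_cocycle_general hexch μB hg
  exact ⟨fun g hg => (hcocycle hg).1, fun g hg => (hcocycle hg).2⟩
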